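/- Let M be a semi-integral residuated pomonoid and write ~a := a\e (= e/a). Then a\(a/b) = ~b and (a\b)/b = ~a for all a, b ∈ M. -/

import Mathlib

/-- A semi-integral residuated pomonoid (sirmonoid): a partially ordered monoid with
left and right residuals, i.e. `b ≤ a\c ↔ a*b ≤ c ↔ a ≤ c/b`, in which the monoid
unit `e` is a maximal element.  `ldiv a c` denotes `a\c` and `rdiv c b` denotes `c/b`. -/
class Sirmonoid (α : Type*) extends PartialOrder α, Monoid α where
  ldiv : α → α → α
  rdiv : α → α → α
  le_ldiv_iff : ∀ a b c : α, b ≤ ldiv a c ↔ a * b ≤ c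
  le_rdiv_iff : ∀ a b c : α, a ≤ rdiv c b ↔ a * b ≤ c
  one_maximal : ∀ a : α, 1 ≤ a → a = 1

open Sirmonoid

namespace Sirmonoid

variable {α : Type*} [Sirmonoid α]

instance : MulRightMono α where
  elim c _ b hab := (le_rdiv_iff _ c _).1 (hab.trans ((le_rdiv_iff b c _).2 le_rfl))

theorem ldiv_self (a : α) : ldiv a a = 1 :=
  one_maximal _ ((le_ldiv_iff _ _ _).2 (mul_one a).le)

theorem rdiv_self (a : α) : rdiv a a = 1 :=
  one_maximal _ ((le_rdiv_iff _ _ _).2 (one_mul a).le)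

theorem rdiv_ldiv_assoc (a b c : α) : rdiv (ldiv a b) c = ldiv a (rdiv b c) :=
  eq_of_forall_le_iff fun x ↦ by
    rw [le_rdiv_iff, le_ldiv_iff, le_ldiv_iff, le_rdiv_iff, mul_assoc]

theorem mul_le_one_symm {a b : α} (h : a * b ≤ 1) : b * a ≤ 1 := by
  have h_absorb : a * (b * a) ≤ a := mul_assoc a b a ▸ mul_le_of_le_one_left' h
  rwa [← le_ldiv_iff, ldiv_self] at h_absorb

theorem one_rdiv_eq_ldiv_one (a : α) : rdiv 1 a = ldiv a 1 :=
  eq_of_forall_le_iff fun x ↦ by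
    rw [le_rdiv_iff, le_ldiv_iff]
    exact ⟨mul_le_one_symm, mul_le_one_symm⟩

end Sirmonoid

/-- In any sirmonoid, `a\(a/b) = ~b` and `(a\b)/b = ~a`, where `~a := a\e = e/a`. -/
theorem sirmonoid_ldiv_rdiv_eq {α : Type*} [Sirmonoid α] :
    ∀ a b : α, ldiv a (rdiv a b) = ldiv b 1 ∧ rdiv (ldiv a b) b = ldiv a 1 := by
  intro a b
  constructor
  · calc ldiv a (rdiv a b) = rdiv (ldiv a a) b := (rdiv_ldiv_assoc a a b).symm
      _ = rdiv 1 b := by rw [ldiv_self]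
      _ = ldiv b 1 := one_rdiv_eq_ldiv_one b
  · calc rdiv (ldiv a b) b = ldiv a (rdiv b b) := rdiv_ldiv_assoc a b b
      _ = ldiv a 1 := by rw [rdiv_self]
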